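/- Let 𝒞 be a small category, (−⊗I) elementary homotopy data on Psh(𝒞), and S a set of monomorphisms of Psh(𝒞). If A is naively fibrant (i.e., A → 1 has the right lifting property with respect to every anodyne extension in 𝔄_I(S)), then for every presheaf X the homotopy relation ≃ is an equivalence relation on the hom-set Hom(X, A). -/

import Mathlib

/-!
Let `a : f ≃ g` and `b : f ≃ h` be homotopies of maps `X ⟶ A`. Placed over the two ends of the
cylinder `X ⊗ I`, they start at the two ends of the constant homotopy at `f`. Lifting against
`gluing0 [∂⁰, ∂¹]` therefore fills the box they form with it to a square
`H : (X ⊗ I) ⊗ I ⟶ A`, and the edge of `H` opposite to the constant one is a homotopy `g ≃ h`.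
So homotopy is a Euclidean relation; being reflexive, it is an equivalence relation.
-/

open CategoryTheory Category Limits

universe w v u

/-- The category of presheaves on a small category. -/
abbrev Psh (C : Type u) [SmallCategory C] := Cᵒᵖ ⥤ Type u

namespace PaperMSMonad

/-- `f` is a retract of `g` in the arrow category. -/
def IsRetractOf {D : Type*} [Category D] {X Y Z W : D} (f : X ⟶ Y) (g : Z ⟶ W) : Prop :=
  ∃ (i : X ⟶ Z) (r : Z ⟶ X) (i' : Y ⟶ W) (r' : W ⟶ Y),
    i ≫ r = 𝟙 X ∧ i' ≫ r' = 𝟙 Y ∧ i ≫ g = f ≫ i' ∧ g ≫ r' = r ≫ f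

/-- The cocone on the restriction of `F : J ⥤ D` to `Set.Iio j`, with point `F.obj j`. -/
@[simps]
def coconeLT {D : Type*} [Category D] {J : Type w} [Preorder J] (F : J ⥤ D) (j : J) :
    Cocone ((Monotone.functor (f := (Subtype.val : Set.Iio j → J))
      (fun _ _ h => h)) ⋙ F) where
  pt := F.obj j
  ι :=
    { app := fun i => F.map (homOfLE i.2.le)
      naturality := fun i i' g => by
        dsimp [Monotone.functor]
        rw [Category.comp_id, ← F.map_comp]
        rfl }

/-- A morphism property is stable under transfinite composition if, for every well-ordered
type `J`, every functor `F : J ⥤ D` which is continuous at limit stages and whose successor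
maps all lie in `W`, and every colimit cocone on `F`, the component of the cocone at the
bottom element lies in `W`. -/
def StableUnderTransfiniteComposition {D : Type*} [Category D]
    (W : MorphismProperty D) : Prop :=
  ∀ (J : Type w) (_ : LinearOrder J) (_ : SuccOrder J) (_ : OrderBot J) (_ : WellFoundedLT J)
    (F : J ⥤ D),
    (∀ (j : J), ¬IsMax j → W (F.map (homOfLE (Order.le_succ j)))) →
    (∀ (j : J), Order.IsSuccLimit j → Nonempty (IsColimit (coconeLT F j))) →
    ∀ (c : Cocone F), Nonempty (IsColimit c) → W (c.ι.app ⊥)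

/-- A class of morphisms is weakly saturated if it contains all isomorphisms and is closed
under pushout (cobase change), retracts and transfinite composition. -/
def IsWeaklySaturated {D : Type*} [Category D] (W : MorphismProperty D) : Prop :=
  (∀ ⦃X Y : D⦄ (f : X ⟶ Y), IsIso f → W f) ∧
  (∀ ⦃Z X Y P : D⦄ (t : Z ⟶ X) (f : Z ⟶ Y) (g : X ⟶ P) (b : Y ⟶ P),
      IsPushout t f g b → W f → W g) ∧
  (∀ ⦃X Y Z W' : D⦄ (f : X ⟶ Y) (g : Z ⟶ W'), IsRetractOf f g → W g → W f) ∧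
  StableUnderTransfiniteComposition.{w} W

/-- The saturated class generated by `S`: the smallest weakly saturated class containing `S`. -/
def SaturatedClassGen {D : Type*} [Category D] (S : MorphismProperty D) :
    MorphismProperty D :=
  fun _ _ f => ∀ W : MorphismProperty D, IsWeaklySaturated.{w} W → S ≤ W → W f

/-- The maps having the right lifting property with respect to all maps in `S`. -/
def RLP {D : Type*} [Category D] (S : MorphismProperty D) : MorphismProperty D :=
  fun _ _ g => ∀ ⦃A B : D⦄ (f : A ⟶ B), S f → HasLiftingProperty f g

/-- The maps having the left lifting property with respect to all maps in `S`. -/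
def LLP {D : Type*} [Category D] (S : MorphismProperty D) : MorphismProperty D :=
  fun _ _ f => ∀ ⦃A B : D⦄ (g : A ⟶ B), S g → HasLiftingProperty f g

end PaperMSMonad

namespace PaperMSMonad

variable {C : Type u} [SmallCategory C]

/-- Elementary homotopy data on the category of presheaves on `C`: a functorial cylinder
`X ↦ X ⊗ I` with endpoint inclusions `∂⁰`, `∂¹` and projection `σ`, such that
`[∂⁰,∂¹] : X + X → X ⊗ I` is always a monomorphism, the cylinder functor preserves small
colimits and monomorphisms, and the endpoint naturality squares at monomorphisms
are pullbacks. -/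
structure ElementaryHomotopyData (C : Type u) [SmallCategory C] where
  cyl : Psh C ⥤ Psh C
  d0 : 𝟭 (Psh C) ⟶ cyl
  d1 : 𝟭 (Psh C) ⟶ cyl
  σ : cyl ⟶ 𝟭 (Psh C)
  d0_σ : ∀ X : Psh C, d0.app X ≫ σ.app X = 𝟙 X
  d1_σ : ∀ X : Psh C, d1.app X ≫ σ.app X = 𝟙 X
  mono_pair : ∀ X : Psh C, Mono (coprod.desc (d0.app X) (d1.app X))
  preservesColimits : PreservesColimitsOfSize.{u, u} cyl
  preservesMono : ∀ ⦃K L : Psh C⦄ (j : K ⟶ L), Mono j → Mono (cyl.map j)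
  isPullback0 : ∀ ⦃K L : Psh C⦄ (j : K ⟶ L), Mono j →
    IsPullback j (d0.app K) (d0.app L) (cyl.map j)
  isPullback1 : ∀ ⦃K L : Psh C⦄ (j : K ⟶ L), Mono j →
    IsPullback j (d1.app K) (d1.app L) (cyl.map j)

namespace ElementaryHomotopyData

variable (E : ElementaryHomotopyData C)

/-- `f ≃ g`: there is a homotopy `θ : X ⊗ I ⟶ Y` from `f` to `g`. -/
def Htpy {X Y : Psh C} (f g : X ⟶ Y) : Prop :=
  ∃ θ : E.cyl.obj X ⟶ Y, E.d0.app X ≫ θ = f ∧ E.d1.app X ≫ θ = g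

/-- `f ≃* g`: the equivalence relation generated by the homotopy relation. -/
def HtpyStar {X Y : Psh C} (f g : X ⟶ Y) : Prop :=
  Relation.EqvGen (fun a b : X ⟶ Y => E.Htpy a b) f g

/-- `[X,Y]`: the quotient of `Hom(X,Y)` by the equivalence relation generated by homotopy. -/
def HQ (X Y : Psh C) :=
  Quot (fun a b : X ⟶ Y => E.Htpy a b)

/-- The class of `f : X ⟶ Y` in `[X,Y]`. -/
def HQ.mk {X Y : Psh C} (f : X ⟶ Y) : E.HQ X Y :=
  Quot.mk _ f

/-- `[f,A] : [Y,A] → [X,A]`, precomposition with `f` on homotopy classes. -/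
def precomp {X Y A : Psh C} (f : X ⟶ Y) : E.HQ Y A → E.HQ X A :=
  Quot.lift (fun h => HQ.mk E (f ≫ h)) (fun h h' hh => Quot.sound (by
    obtain ⟨θ, h0, h1⟩ := hh
    exact ⟨E.cyl.map f ≫ θ,
      by rw [← Category.assoc, ← E.d0.naturality, Functor.id_map, Category.assoc, h0],
      by rw [← Category.assoc, ← E.d1.naturality, Functor.id_map, Category.assoc, h1]⟩))

/-- For a monomorphism `j : K ⟶ L` the canonical map `K⊗I ∪ L⊗{0} ⟶ L⊗I`. -/
noncomputable def gluing0 {K L : Psh C} (j : K ⟶ L) :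
    pushout (E.d0.app K) j ⟶ E.cyl.obj L :=
  pushout.desc (E.cyl.map j) (E.d0.app L) (by rw [← E.d0.naturality j]; rfl)

/-- For a monomorphism `j : K ⟶ L` the canonical map `K⊗I ∪ L⊗{1} ⟶ L⊗I`. -/
noncomputable def gluing1 {K L : Psh C} (j : K ⟶ L) :
    pushout (E.d1.app K) j ⟶ E.cyl.obj L :=
  pushout.desc (E.cyl.map j) (E.d1.app L) (by rw [← E.d1.naturality j]; rfl)

/-- For a map `j : K ⟶ L` the canonical map `K⊗I ∪ L⊗∂I ⟶ L⊗I`. -/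
noncomputable def gluingBoth {K L : Psh C} (j : K ⟶ L) :
    pushout (coprod.desc (E.d0.app K) (E.d1.app K)) (coprod.map j j) ⟶ E.cyl.obj L :=
  pushout.desc (E.cyl.map j) (coprod.desc (E.d0.app L) (E.d1.app L)) (by
    apply coprod.hom_ext
    · rw [coprod.inl_desc_assoc, coprod.inl_map_assoc, coprod.inl_desc]
      exact (E.d0.naturality j).symm
    · rw [coprod.inr_desc_assoc, coprod.inr_map_assoc, coprod.inr_desc]
      exact (E.d1.naturality j).symm)

/-- The class `Λ⁰_I(S)`. -/
inductive Lambda0 (E : ElementaryHomotopyData C) (S : MorphismProperty (Psh C)) :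
    ∀ ⦃X Y : Psh C⦄, (X ⟶ Y) → Prop
  | ofS ⦃X Y : Psh C⦄ (f : X ⟶ Y) : S f → Lambda0 E S f
  | glue0 ⦃K L : Psh C⦄ (j : K ⟶ L) : Mono j → Lambda0 E S (E.gluing0 j)
  | glue1 ⦃K L : Psh C⦄ (j : K ⟶ L) : Mono j → Lambda0 E S (E.gluing1 j)

/-- The operation `𝚲(-)` applied to a class of maps. -/
inductive LambdaStep (E : ElementaryHomotopyData C) (P : MorphismProperty (Psh C)) :
    ∀ ⦃X Y : Psh C⦄, (X ⟶ Y) → Prop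
  | glue ⦃K L : Psh C⦄ (j : K ⟶ L) : P j → LambdaStep E P (E.gluingBoth j)

/-- The class `Λⁿ_I(S)`. -/
def LambdaN (S : MorphismProperty (Psh C)) : ℕ → MorphismProperty (Psh C)
  | 0 => Lambda0 E S
  | (n + 1) => LambdaStep E (LambdaN S n)

/-- The class `Λ_I(S) = ⋃ₙ Λⁿ_I(S)`. -/
def Lambda (S : MorphismProperty (Psh C)) : MorphismProperty (Psh C) :=
  fun _ _ f => ∃ n : ℕ, LambdaN E S n f

/-- The class `𝔄_I(S)` of anodyne extensions: maps with the left lifting property with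
respect to every map having the right lifting property with respect to `Λ_I(S)`. -/
def Anodyne (S : MorphismProperty (Psh C)) : MorphismProperty (Psh C) :=
  LLP (RLP (E.Lambda S))

/-- `A` is naively fibrant if `A ⟶ 1` has the right lifting property with respect to all
anodyne extensions. -/
def NaivelyFibrant (S : MorphismProperty (Psh C)) (A : Psh C) : Prop :=
  RLP (E.Anodyne S) (terminal.from A)

/-- A map `f : X ⟶ Y` is a `T`-weak equivalence if `[f,A] : [Y,A] → [X,A]` is a bijection
for every `T`-algebra `A`. -/
def TWeakEquiv (T : Monad (Psh C)) : MorphismProperty (Psh C) :=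
  fun _ _ f => ∀ A : T.Algebra, Function.Bijective (E.precomp (A := A.A) f)

end ElementaryHomotopyData

/-- The generating set of units `𝔊 = {η_{Gⁱ} : Gⁱ ⟶ T(Gⁱ)}`. -/
inductive unitsOf (T : Monad (Psh C)) {ι : Type u} (G : ι → Psh C) :
    ∀ ⦃X Y : Psh C⦄, (X ⟶ Y) → Prop
  | mk (i : ι) : unitsOf T G (T.η.app (G i))

end PaperMSMonad

namespace PaperMSMonad

open CategoryTheory Category Limits

section BinaryCoproduct

variable {D D' : Type*} [Category D] [Category D'] (F : D ⥤ D') (X Y : D)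
  [HasBinaryCoproduct X Y] [PreservesColimit (pair X Y) F]

theorem exists_map_coprod_desc {A : D'} (a : F.obj X ⟶ A) (b : F.obj Y ⟶ A) :
    ∃ c : F.obj (X ⨿ Y) ⟶ A, F.map coprod.inl ≫ c = a ∧ F.map coprod.inr ≫ c = b :=
  let ⟨c, hc⟩ := BinaryCofan.IsColimit.desc'
    (isColimitOfHasBinaryCoproductOfPreservesColimit F X Y) a b
  ⟨c, hc⟩

end BinaryCoproduct

namespace ElementaryHomotopyData

variable {C : Type u} [SmallCategory C] (E : ElementaryHomotopyData C)

instance preservesFiniteColimits_cyl : PreservesFiniteColimits E.cyl :=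
  have := E.preservesColimits
  PreservesColimitsOfSize.preservesFiniteColimits E.cyl

/-- The inclusion `[∂⁰, ∂¹] : X + X ⟶ X ⊗ I` of the two ends of the cylinder. -/
noncomputable def boundaryInclusion (X : Psh C) : X ⨿ X ⟶ E.cyl.obj X :=
  coprod.desc (E.d0.app X) (E.d1.app X)

theorem inl_boundaryInclusion (X : Psh C) : coprod.inl ≫ E.boundaryInclusion X = E.d0.app X :=
  coprod.inl_desc _ _

theorem inr_boundaryInclusion (X : Psh C) : coprod.inr ≫ E.boundaryInclusion X = E.d1.app X :=
  coprod.inr_desc _ _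

instance mono_boundaryInclusion (X : Psh C) : Mono (E.boundaryInclusion X) :=
  E.mono_pair X

theorem d0_comp_σ_comp {X A : Psh C} (f : X ⟶ A) : E.d0.app X ≫ E.σ.app X ≫ f = f := by
  simpa using E.d0_σ X =≫ f

theorem d1_comp_σ_comp {X A : Psh C} (f : X ⟶ A) : E.d1.app X ≫ E.σ.app X ≫ f = f := by
  simpa using E.d1_σ X =≫ f

theorem d0_comp_map_comp {K L A : Psh C} (j : K ⟶ L) (H : E.cyl.obj L ⟶ A) :
    E.d0.app K ≫ E.cyl.map j ≫ H = j ≫ E.d0.app L ≫ H :=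
  (E.d0.naturality_assoc j H).symm

theorem d1_comp_map_comp {K L A : Psh C} (j : K ⟶ L) (H : E.cyl.obj L ⟶ A) :
    E.d1.app K ≫ E.cyl.map j ≫ H = j ≫ E.d1.app L ≫ H :=
  (E.d1.naturality_assoc j H).symm

theorem Htpy.refl {X A : Psh C} (f : X ⟶ A) : E.Htpy f f :=
  ⟨E.σ.app X ≫ f, E.d0_comp_σ_comp f, E.d1_comp_σ_comp f⟩

theorem inl_gluing0 {K L : Psh C} (j : K ⟶ L) :
    pushout.inl (E.d0.app K) j ≫ E.gluing0 j = E.cyl.map j :=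
  pushout.inl_desc _ _ _

theorem inr_gluing0 {K L : Psh C} (j : K ⟶ L) :
    pushout.inr (E.d0.app K) j ≫ E.gluing0 j = E.d0.app L :=
  pushout.inr_desc _ _ _

theorem exists_homotopy_extension {K L A : Psh C} (j : K ⟶ L)
    [HasLiftingProperty (E.gluing0 j) (terminal.from A)]
    (θ : E.cyl.obj K ⟶ A) (f : L ⟶ A) (h : E.d0.app K ≫ θ = j ≫ f) :
    ∃ H : E.cyl.obj L ⟶ A, E.cyl.map j ≫ H = θ ∧ E.d0.app L ≫ H = f := by
  have sq : CommSq (pushout.desc θ f h) (E.gluing0 j) (terminal.from A) (terminal.from _) :=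
    ⟨Subsingleton.elim _ _⟩
  refine ⟨sq.lift, ?_, ?_⟩
  · rw [← E.inl_gluing0, Category.assoc, sq.fac_left, pushout.inl_desc]
  · rw [← E.inr_gluing0, Category.assoc, sq.fac_left, pushout.inr_desc]

section Filling

variable {X A : Psh C}
  [HasLiftingProperty (E.gluing0 (E.boundaryInclusion X)) (terminal.from A)]

theorem exists_square_of_common_source {f : X ⟶ A} {a b : E.cyl.obj X ⟶ A}
    (ha : E.d0.app X ≫ a = f) (hb : E.d0.app X ≫ b = f) :
    ∃ H : E.cyl.obj (E.cyl.obj X) ⟶ A,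
      E.cyl.map (E.d0.app X) ≫ H = a ∧ E.cyl.map (E.d1.app X) ≫ H = b := by
  obtain ⟨c, hca, hcb⟩ := exists_map_coprod_desc E.cyl X X a b
  have hc : E.d0.app (X ⨿ X) ≫ c = E.boundaryInclusion X ≫ E.σ.app X ≫ f := by
    apply coprod.hom_ext
    · rw [← E.d0_comp_map_comp, hca, ha, ← Category.assoc, E.inl_boundaryInclusion,
        E.d0_comp_σ_comp]
    · rw [← E.d0_comp_map_comp, hcb, hb, ← Category.assoc, E.inr_boundaryInclusion,
        E.d1_comp_σ_comp]
  obtain ⟨H, hH, -⟩ := E.exists_homotopy_extension (E.boundaryInclusion X) c _ hc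
  refine ⟨H, ?_, ?_⟩
  · rw [← hca, ← hH, ← E.inl_boundaryInclusion, E.cyl.map_comp_assoc]
  · rw [← hcb, ← hH, ← E.inr_boundaryInclusion, E.cyl.map_comp_assoc]

variable {E} in
theorem Htpy.of_common_source {f g h : X ⟶ A} (hfg : E.Htpy f g) (hfh : E.Htpy f h) :
    E.Htpy g h := by
  obtain ⟨a, ha, rfl⟩ := hfg
  obtain ⟨b, hb, rfl⟩ := hfh
  obtain ⟨H, rfl, rfl⟩ := E.exists_square_of_common_source ha hb
  exact ⟨E.d1.app (E.cyl.obj X) ≫ H, (E.d1_comp_map_comp _ H).symm,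
    (E.d1_comp_map_comp _ H).symm⟩

end Filling

theorem lambda_le_anodyne (S : MorphismProperty (Psh C)) : E.Lambda S ≤ E.Anodyne S :=
  fun _ _ _ hf _ _ _ hp => hp _ hf

theorem anodyne_gluing0 (S : MorphismProperty (Psh C)) {K L : Psh C} (j : K ⟶ L) [Mono j] :
    E.Anodyne S (E.gluing0 j) :=
  E.lambda_le_anodyne S _ ⟨0, .glue0 j inferInstance⟩

end ElementaryHomotopyData

theorem htpy_equivalence_of_naivelyFibrant_general {C : Type u} [SmallCategory C]
    (E : ElementaryHomotopyData C) (X A : Psh C)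
    [HasLiftingProperty (E.gluing0 (E.boundaryInclusion X)) (terminal.from A)] :
    Equivalence (fun f g : X ⟶ A => E.Htpy f g) where
  refl := .refl E
  symm hfg := hfg.of_common_source (.refl E _)
  trans hfg hgh := (hfg.of_common_source (.refl E _)).of_common_source hgh

/-- Lemma: if `A` is naively fibrant with respect to `𝔄_I(S)` for a set `S` of
monomorphisms, then the homotopy relation is an equivalence relation on `Hom(X, A)`. -/
theorem htpy_equivalence_of_naivelyFibrant {C : Type u} [SmallCategory C]
    (E : ElementaryHomotopyData C) (S : MorphismProperty (Psh C))
    (hS : S ≤ MorphismProperty.monomorphisms (Psh C))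
    (A : Psh C) (hA : E.NaivelyFibrant S A) (X : Psh C) :
    Equivalence (fun f g : X ⟶ A => E.Htpy f g) := by
  have := hA _ (E.anodyne_gluing0 S (E.boundaryInclusion X))
  exact htpy_equivalence_of_naivelyFibrant_general E X A

end PaperMSMonad
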